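/- arXiv:2012.04087 — 2 statements merged into one kernel-verified Lean document; each statement's English description precedes it below -/
import Mathlib

section
/- Let A ∈ ℂ^{L×N} be a generalized incidence matrix of a connected network, let y_L ∈ ℂ^L have all entries nonzero, let y_T ∈ ℂ^N, and let Y_N = Aᴴ diag(y_L) A + diag(y_T). If Null(Y_N) ⊆ Null(A), then: rank(Y_N) = rank(A) in case y_T = 0, and rank(Y_N) = |N| (i.e., Y_N is invertible) in case y_T ≠ 0. -/
open Matrix

/-!
A vector `x` with `A x = 0` satisfies `x i = a x k` along every branch, and `a ≠ 0`, so on a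
connected network a single vanishing entry of `x` forces `x = 0`. If `Y = B A + diag y` and
`Y x = 0`, then `A x = 0` by assumption, hence `diag y x = 0`, and `x` vanishes wherever `y` does
not. So `Y` has trivial kernel as soon as `y ≠ 0`. If `y = 0`, then `Y` and `A` have the same
kernel, hence the same rank.
-/

section Rank

variable {l m n K : Type*} [Fintype n] [Field K]

theorem rank_le_rank_of_ker_le_ker {A : Matrix l n K} {Y : Matrix m n K}
    (h : LinearMap.ker Y.mulVecLin ≤ LinearMap.ker A.mulVecLin) : A.rank ≤ Y.rank := by
  have ker_le := Submodule.finrank_mono h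
  have rank_nullity_A : A.rank + _ = _ := A.mulVecLin.finrank_range_add_finrank_ker
  have rank_nullity_Y : Y.rank + _ = _ := Y.mulVecLin.finrank_range_add_finrank_ker
  omega

theorem rank_mul_eq_right_of_ker_le_ker [Fintype m] {B : Matrix l m K} {A : Matrix m n K}
    (h : LinearMap.ker (B * A).mulVecLin ≤ LinearMap.ker A.mulVecLin) :
    (B * A).rank = A.rank :=
  (rank_mul_le_right B A).antisymm (rank_le_rank_of_ker_le_ker h)

end Rank

theorem forall_of_preconnected_of_adj {V : Type*} {G : SimpleGraph V} {p : V → Prop}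
    (hG : G.Preconnected) (hadj : ∀ ⦃u v⦄, G.Adj u v → p u → p v) {u : V} (hu : p u) (v : V) :
    p v := by
  have huv := (G.reachable_iff_reflTransGen u v).mp (hG u v)
  induction huv with
  | refl => exact hu
  | tail _ h ih => exact hadj h ih

section Network

variable {L N R : Type*}

/-- The underlying simple graph of a network with branches `L`, the branch `l` joining the nodes
`e₁ l` and `e₂ l`. -/
abbrev branchGraph (e₁ e₂ : L → N) : SimpleGraph N :=
  SimpleGraph.fromRel fun i k => ∃ l, e₁ l = i ∧ e₂ l = k

/-- The generalized incidence matrix of a network with tap ratios `a`: row `l` has entry `1` at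
`e₁ l` and `-a l` at `e₂ l`. The two entries are added when the ends coincide, so that the relation
`x (e₁ l) = a l * x (e₂ l)` describes the kernel for loops as well. -/
def tapIncMatrix [DecidableEq N] [Ring R] (e₁ e₂ : L → N) (a : L → R) : Matrix L N R :=
  of fun l => Pi.single (e₁ l) 1 - Pi.single (e₂ l) (a l)

variable [DecidableEq N] {e₁ e₂ : L → N}

theorem eq_tapIncMatrix [Ring R] {a : L → R} {A : Matrix L N R} (hends : ∀ l, e₁ l ≠ e₂ l)
    (hA : ∀ l j, A l j = if j = e₁ l then 1 else if j = e₂ l then -a l else 0) :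
    A = tapIncMatrix e₁ e₂ a := by
  ext l j
  rw [hA]
  by_cases hj : j = e₁ l
  · simp [tapIncMatrix, hj, hends l]
  · simp [tapIncMatrix, Pi.single_apply, hj, neg_ite]

variable [Fintype N]

theorem tapIncMatrix_mulVec_apply [Ring R] (a : L → R) (x : N → R) (l : L) :
    (tapIncMatrix e₁ e₂ a *ᵥ x) l = x (e₁ l) - a l * x (e₂ l) := by
  change (Pi.single (e₁ l) 1 - Pi.single (e₂ l) (a l)) ⬝ᵥ x = _
  rw [sub_dotProduct, single_one_dotProduct, single_dotProduct]

theorem apply_eq_zero_of_adj_of_tapIncMatrix_mulVec_eq_zero [Ring R] [NoZeroDivisors R]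
    {a : L → R} (ha : ∀ l, a l ≠ 0) {x : N → R} (hx : tapIncMatrix e₁ e₂ a *ᵥ x = 0) {i k : N}
    (hik : (branchGraph e₁ e₂).Adj i k) (hi : x i = 0) : x k = 0 := by
  have branch_eq (l : L) : x (e₁ l) = a l * x (e₂ l) :=
    sub_eq_zero.mp ((tapIncMatrix_mulVec_apply a x l).symm.trans (congrFun hx l))
  obtain ⟨-, ⟨l, rfl, rfl⟩ | ⟨l, rfl, rfl⟩⟩ := (SimpleGraph.fromRel_adj _ _ _).mp hik
  · exact (mul_eq_zero.mp ((branch_eq l).symm.trans hi)).resolve_left (ha l)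
  · rw [branch_eq, hi, mul_zero]

theorem eq_zero_of_tapIncMatrix_mulVec_eq_zero [Ring R] [NoZeroDivisors R]
    (hconn : (branchGraph e₁ e₂).Preconnected) {a : L → R} (ha : ∀ l, a l ≠ 0) {x : N → R}
    (hx : tapIncMatrix e₁ e₂ a *ᵥ x = 0) {i : N} (hi : x i = 0) : x = 0 :=
  funext <| forall_of_preconnected_of_adj (p := fun j => x j = 0) hconn
    (fun _ _ => apply_eq_zero_of_adj_of_tapIncMatrix_mulVec_eq_zero ha hx) hi

variable [Fintype L]

theorem isUnit_mul_tapIncMatrix_add_diagonal [Field R]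
    (hconn : (branchGraph e₁ e₂).Preconnected) {a : L → R} (ha : ∀ l, a l ≠ 0)
    {B : Matrix N L R} {y : N → R} (hy : y ≠ 0)
    (hnull : ∀ x : N → R,
      (B * tapIncMatrix e₁ e₂ a + diagonal y) *ᵥ x = 0 → tapIncMatrix e₁ e₂ a *ᵥ x = 0) :
    IsUnit (B * tapIncMatrix e₁ e₂ a + diagonal y) := by
  obtain ⟨j, hj⟩ : ∃ j, y j ≠ 0 := Function.ne_iff.mp hy
  refine mulVec_injective_iff_isUnit.mp
    ((injective_iff_map_eq_zero (mulVecLin _)).mpr fun x hx => ?_)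
  have hAx := hnull x hx
  have diag_mulVec : diagonal y *ᵥ x = 0 := by
    rwa [mulVecLin_apply, add_mulVec, ← mulVec_mulVec, hAx, mulVec_zero, zero_add] at hx
  have hxj : y j * x j = 0 := (mulVec_diagonal y x j).symm.trans (congrFun diag_mulVec j)
  exact eq_zero_of_tapIncMatrix_mulVec_eq_zero hconn ha hAx
    ((mul_eq_zero.mp hxj).resolve_left hj)

theorem stmt7_general [Field R] (hconn : (branchGraph e₁ e₂).Preconnected) {a : L → R}
    (ha : ∀ l, a l ≠ 0) (B : Matrix N L R) (y : N → R)
    (hnull : ∀ x : N → R,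
      (B * tapIncMatrix e₁ e₂ a + diagonal y) *ᵥ x = 0 → tapIncMatrix e₁ e₂ a *ᵥ x = 0) :
    (y = 0 → (B * tapIncMatrix e₁ e₂ a + diagonal y).rank = (tapIncMatrix e₁ e₂ a).rank) ∧
    (y ≠ 0 → (B * tapIncMatrix e₁ e₂ a + diagonal y).rank = Fintype.card N ∧
      IsUnit (B * tapIncMatrix e₁ e₂ a + diagonal y)) := by
  constructor
  · rintro rfl
    rw [diagonal_zero', add_zero] at hnull ⊢
    exact rank_mul_eq_right_of_ker_le_ker hnull
  · intro hy
    have hunit := isUnit_mul_tapIncMatrix_add_diagonal hconn ha hy hnull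
    exact ⟨rank_of_isUnit _ hunit, hunit⟩

end Network

/-- generalized Theorem 1. Let `A ∈ ℂ^{L×N}` be a generalized incidence
matrix of a connected network, `y_L ∈ ℂ^L` with all entries nonzero, `y_T ∈ ℂ^N`, and
`Y_N = Aᴴ diag(y_L) A + diag(y_T)`. If `Null(Y_N) ⊆ Null(A)`, then `rank Y_N = rank A`
when `y_T = 0`, and `rank Y_N = |N|` (i.e. `Y_N` is invertible) when `y_T ≠ 0`. -/
theorem stmt7 {L N : Type*} [Fintype L] [Fintype N] [DecidableEq N] [DecidableEq L]
    [Nonempty L] [Nonempty N]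
    (e1 e2 : L → N) (a : L → ℂ)
    (hends : ∀ l, e1 l ≠ e2 l) (ha : ∀ l, a l ≠ 0)
    (A : Matrix L N ℂ)
    (hA : ∀ l j, A l j = if j = e1 l then 1 else if j = e2 l then -(a l) else 0)
    (hconn : (SimpleGraph.fromRel fun i k => ∃ l, e1 l = i ∧ e2 l = k).Connected)
    (yL : L → ℂ) (hyL : ∀ l, yL l ≠ 0) (yT : N → ℂ)
    (hnull : ∀ x : N → ℂ,
      (Aᴴ * Matrix.diagonal yL * A + Matrix.diagonal yT).mulVec x = 0 → A.mulVec x = 0) :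
    (yT = 0 → (Aᴴ * Matrix.diagonal yL * A + Matrix.diagonal yT).rank = A.rank) ∧
    (yT ≠ 0 → (Aᴴ * Matrix.diagonal yL * A + Matrix.diagonal yT).rank = Fintype.card N ∧
      IsUnit (Aᴴ * Matrix.diagonal yL * A + Matrix.diagonal yT)) := by
  obtain rfl := eq_tapIncMatrix hends hA
  exact stmt7_general hconn.preconnected ha _ yT hnull
end

section
/- Let A ∈ ℂ^{L×N} be a generalized incidence matrix of a connected network with |L| = |N| − 1 (so the network graph is a tree), let y_L ∈ ℂ^L have all entries nonzero, and let Y_N = Aᴴ diag(y_L) A (no shunts, y_T = 0). Then Null(Y_N) = Null(A); in particular Null(Y_N) ⊆ Null(A) and rank(Y_N) = |N| − 1. -/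
open Matrix

/-!
A vector in `Null(A)` satisfies `x (e1 l) = a l * x (e2 l)` on every branch, so it vanishes at one
end of a branch iff it vanishes at the other, and in a connected network it is determined by its
value at a single node. Hence `rank A ≥ |N| - 1 = |L|`: in a tree `A` has full row rank, so
`Aᴴ diag(y)` has a left inverse, and therefore `Aᴴ diag(y) A` has the null space and the rank of
`A`. Everything here is linear algebra over a field with an involution.
-/

section LeftInverse

variable {l m n R : Type*} [Fintype l] [Fintype m] [Fintype n] [DecidableEq m]

theorem mul_mulVec_eq_zero_iff_of_mul_eq_one [Semiring R] {Q : Matrix m l R} {P : Matrix l m R}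
    (hQP : Q * P = 1) (A : Matrix m n R) (x : n → R) : (P * A) *ᵥ x = 0 ↔ A *ᵥ x = 0 := by
  constructor
  · intro h
    calc A *ᵥ x = (Q * (P * A)) *ᵥ x := by rw [← Matrix.mul_assoc, hQP, Matrix.one_mul]
      _ = Q *ᵥ ((P * A) *ᵥ x) := (mulVec_mulVec ..).symm
      _ = 0 := by rw [h, mulVec_zero]
  · intro h
    rw [← mulVec_mulVec, h, mulVec_zero]

theorem rank_mul_eq_right_of_mul_eq_one [CommSemiring R] [StrongRankCondition R]
    {Q : Matrix m l R} {P : Matrix l m R} (hQP : Q * P = 1) (A : Matrix m n R) :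
    (P * A).rank = A.rank := by
  refine (rank_mul_le_right P A).antisymm ?_
  calc A.rank = (Q * (P * A)).rank := by rw [← Matrix.mul_assoc, hQP, Matrix.one_mul]
    _ ≤ (P * A).rank := rank_mul_le_right Q (P * A)

end LeftInverse

section FullRowRank

variable {m n K : Type*} [Fintype m] [Fintype n] [DecidableEq m] [Field K]

theorem exists_mul_eq_one_of_rank_eq_card {A : Matrix m n K} (hA : A.rank = Fintype.card m) :
    ∃ B : Matrix n m K, A * B = 1 := by
  have hrange : LinearMap.range A.mulVecLin = ⊤ :=
    Submodule.eq_top_of_finrank_eq (hA.trans (Module.finrank_fintype_fun_eq_card K).symm)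
  exact mulVec_surjective_iff_exists_right_inverse.mp (LinearMap.range_eq_top.mp hrange)

theorem exists_mul_conjTranspose_mul_diagonal_eq_one [StarRing K] {A : Matrix m n K}
    (hA : A.rank = Fintype.card m) {y : m → K} (hy : ∀ i, y i ≠ 0) :
    ∃ Q : Matrix m n K, Q * (Aᴴ * diagonal y) = 1 := by
  obtain ⟨B, hAB⟩ := exists_mul_eq_one_of_rank_eq_card hA
  refine ⟨diagonal y⁻¹ * Bᴴ, ?_⟩
  calc diagonal y⁻¹ * Bᴴ * (Aᴴ * diagonal y)
      = diagonal y⁻¹ * (A * B)ᴴ * diagonal y := by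
        simp only [conjTranspose_mul, Matrix.mul_assoc]
    _ = 1 := by simp [hAB, hy]

end FullRowRank

section Network

variable {L N K : Type*}

/-- The graph of a network whose branch `l` joins the nodes `e1 l` and `e2 l`. Parallel branches
are merged and loops dropped, which does not affect connectedness. -/
def networkGraph (e1 e2 : L → N) : SimpleGraph N :=
  SimpleGraph.fromRel fun i k => ∃ l, e1 l = i ∧ e2 l = k

/-- The generalized incidence matrix with tap ratios `a`: row `l` has entry `1` in column `e1 l`
and `-a l` in column `e2 l`. On a loop the two entries are added. -/
def generalizedIncidence [DecidableEq N] [Ring K] (e1 e2 : L → N) (a : L → K) : Matrix L N K :=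
  of fun l => Pi.single (e1 l) 1 - Pi.single (e2 l) (a l)

theorem generalizedIncidence_apply_of_ne [DecidableEq N] [Ring K] {e1 e2 : L → N} (a : L → K)
    {l : L} (hl : e1 l ≠ e2 l) (j : N) :
    generalizedIncidence e1 e2 a l j = if j = e1 l then 1 else if j = e2 l then -a l else 0 := by
  by_cases hj : j = e1 l
  · subst hj
    simp [generalizedIncidence, hl]
  · simp [generalizedIncidence, Pi.single_apply, hj, neg_ite]

variable [Fintype N] [DecidableEq N] {e1 e2 : L → N}

theorem generalizedIncidence_mulVec_apply [Ring K] (a : L → K) (x : N → K) (l : L) :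
    (generalizedIncidence e1 e2 a *ᵥ x) l = x (e1 l) - a l * x (e2 l) := by
  calc (generalizedIncidence e1 e2 a *ᵥ x) l
      = (Pi.single (e1 l) 1 - Pi.single (e2 l) (a l)) ⬝ᵥ x := rfl
    _ = x (e1 l) - a l * x (e2 l) := by
        rw [sub_dotProduct, single_dotProduct, single_dotProduct, one_mul]

section NullSpace

variable [Ring K] [NoZeroDivisors K] {a : L → K} {x : N → K}

theorem apply_eq_zero_iff_of_generalizedIncidence_mulVec_eq_zero (ha : ∀ l, a l ≠ 0)
    (hx : generalizedIncidence e1 e2 a *ᵥ x = 0) (l : L) : x (e1 l) = 0 ↔ x (e2 l) = 0 := by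
  have hbranch : x (e1 l) = a l * x (e2 l) := by
    rw [← sub_eq_zero, ← generalizedIncidence_mulVec_apply, hx, Pi.zero_apply]
  rw [hbranch, mul_eq_zero, or_iff_right (ha l)]

theorem apply_eq_zero_of_networkGraph_reachable (ha : ∀ l, a l ≠ 0)
    (hx : generalizedIncidence e1 e2 a *ᵥ x = 0) {i k : N}
    (hik : (networkGraph e1 e2).Reachable i k) (hi : x i = 0) : x k = 0 := by
  have hends := apply_eq_zero_iff_of_generalizedIncidence_mulVec_eq_zero ha hx
  obtain ⟨walk⟩ := hik
  induction walk with
  | nil => exact hi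
  | cons hadj _ ih =>
    refine ih ?_
    obtain ⟨-, ⟨l, rfl, rfl⟩ | ⟨l, rfl, rfl⟩⟩ := (SimpleGraph.fromRel_adj ..).mp hadj
    · exact (hends l).mp hi
    · exact (hends l).mpr hi

end NullSpace

variable [Field K] {a : L → K}

theorem finrank_ker_generalizedIncidence_le_one (ha : ∀ l, a l ≠ 0)
    (hconn : (networkGraph e1 e2).Connected) :
    Module.finrank K (LinearMap.ker (generalizedIncidence e1 e2 a).mulVecLin) ≤ 1 := by
  obtain ⟨r⟩ := hconn.nonempty
  have hinj : Function.Injective ((LinearMap.proj r : (N → K) →ₗ[K] K).domRestrict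
      (LinearMap.ker (generalizedIncidence e1 e2 a).mulVecLin)) := by
    refine (injective_iff_map_eq_zero _).mpr fun ⟨x, hx⟩ hxr => Subtype.ext (funext fun k => ?_)
    exact apply_eq_zero_of_networkGraph_reachable ha hx (hconn.preconnected r k) hxr
  simpa using LinearMap.finrank_le_finrank_of_injective hinj

theorem card_le_rank_generalizedIncidence_add_one (ha : ∀ l, a l ≠ 0)
    (hconn : (networkGraph e1 e2).Connected) :
    Fintype.card N ≤ (generalizedIncidence e1 e2 a).rank + 1 := by
  calc Fintype.card N
      = (generalizedIncidence e1 e2 a).rank +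
          Module.finrank K (LinearMap.ker (generalizedIncidence e1 e2 a).mulVecLin) := by
        rw [rank, LinearMap.finrank_range_add_finrank_ker, Module.finrank_fintype_fun_eq_card]
    _ ≤ (generalizedIncidence e1 e2 a).rank + 1 := by
        gcongr
        exact finrank_ker_generalizedIncidence_le_one ha hconn

theorem rank_generalizedIncidence_eq_card [Fintype L] (ha : ∀ l, a l ≠ 0)
    (hconn : (networkGraph e1 e2).Connected) (hcard : Fintype.card L = Fintype.card N - 1) :
    (generalizedIncidence e1 e2 a).rank = Fintype.card L := by
  have hlower := card_le_rank_generalizedIncidence_add_one ha hconn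
  have hupper := (generalizedIncidence e1 e2 a).rank_le_card_height
  omega

theorem stmt13_general [Fintype L] [DecidableEq L] [StarRing K] (ha : ∀ l, a l ≠ 0)
    (hconn : (networkGraph e1 e2).Connected) (hcard : Fintype.card L = Fintype.card N - 1)
    {y : L → K} (hy : ∀ l, y l ≠ 0) {A : Matrix L N K} (hA : A = generalizedIncidence e1 e2 a) :
    {x : N → K | (Aᴴ * diagonal y * A) *ᵥ x = 0} = {x : N → K | A *ᵥ x = 0} ∧
      (Aᴴ * diagonal y * A).rank = Fintype.card N - 1 := by
  have hrank : A.rank = Fintype.card L := hA ▸ rank_generalizedIncidence_eq_card ha hconn hcard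
  obtain ⟨Q, hQ⟩ := exists_mul_conjTranspose_mul_diagonal_eq_one hrank hy
  refine ⟨Set.ext fun x => mul_mulVec_eq_zero_iff_of_mul_eq_one hQ A x, ?_⟩
  rw [rank_mul_eq_right_of_mul_eq_one hQ, hrank, hcard]

end Network

/-- Theorem 3, Condition 2. Let `A ∈ ℂ^{L×N}` be a generalized
incidence matrix of a connected network with `|L| = |N| - 1` (a tree), `y_L ∈ ℂ^L` with
all entries nonzero, and `Y_N = Aᴴ diag(y_L) A` (no shunts). Then
`Null(Y_N) = Null(A)`; in particular `Null(Y_N) ⊆ Null(A)` and `rank Y_N = |N| - 1`. -/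
theorem stmt13 {L N : Type*} [Fintype L] [Fintype N] [DecidableEq N] [DecidableEq L]
    [Nonempty L] [Nonempty N]
    (e1 e2 : L → N) (a : L → ℂ)
    (hends : ∀ l, e1 l ≠ e2 l) (ha : ∀ l, a l ≠ 0)
    (A : Matrix L N ℂ)
    (hA : ∀ l j, A l j = if j = e1 l then 1 else if j = e2 l then -(a l) else 0)
    (hconn : (SimpleGraph.fromRel fun i k => ∃ l, e1 l = i ∧ e2 l = k).Connected)
    (hcard : Fintype.card L = Fintype.card N - 1)
    (yL : L → ℂ) (hyL : ∀ l, yL l ≠ 0) :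
    {x : N → ℂ | (Aᴴ * Matrix.diagonal yL * A).mulVec x = 0} =
      {x : N → ℂ | A.mulVec x = 0} ∧
    (Aᴴ * Matrix.diagonal yL * A).rank = Fintype.card N - 1 := by
  have hA' : A = generalizedIncidence e1 e2 a := Matrix.ext fun l j =>
    (hA l j).trans (generalizedIncidence_apply_of_ne a (hends l) j).symm
  exact stmt13_general ha hconn hcard hyL hA'
end
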